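/- arXiv:2203.14729 — 2 statements merged into one kernel-verified Lean document; each statement's English description precedes it below -/
import Mathlib

section
/- Let P be a locally compact Hausdorff space and (u_β)_{β∈B} a family in C₀(P) that is a normalized frame in the state sense, i.e., for every regular Borel probability measure μ on P and every x ∈ C₀(P) the family (∫_P |x·u_β|² dμ)_{β∈B} is summable with sum equal to ∫_P |x|² dμ. Let K = K(P) = (αP × ℕ∞) \ {(∞_P, ∞)}. For β ∈ B define y_β ∈ C₀(K) by y_β(p,n) = u_β(p) for p ∈ P and y_β(∞_P,n) = 0, and for n ∈ ℕ let w_n ∈ C₀(K) be the indicator function of the clopen compact set αP × {n}. Then the combined family (y_β)_{β∈B} together with (w_n)_{n∈ℕ} is a frame in C₀(K) with bounds 1 and 2 in the state sense: for every regular Borel probability measure μ on K and every x ∈ C₀(K), the family of integrals (∫_K |x·y_β|² dμ)_β together with (∫_K |x·w_n|² dμ)_n is summable and ∫_K |x|² dμ ≤ (the total sum) ≤ 2·∫_K |x|² dμ. -/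
/-!
Everything is decided pointwise. Let `K` be a Hausdorff space and `(x j)` a family in `C₀(K, ℂ)`
whose sum `∑ j, ‖x j q‖ ^ 2` converges to a value in `[1, 2]` at every `q`. For a regular
probability measure `μ` the upper frame bound follows by integrating finite partial sums. The
index set may be uncountable, so the lower bound cannot come from monotone convergence; it comes
from a Dini argument instead. Regularity confines `μ`, up to `ε`, to a compact set `C`, and on `C`
compactness gives a single finite partial sum of `∑ j, ‖v * x j‖ ^ 2` exceeding `‖v‖ ^ 2 - ε`
(`exists_finset_le_integral_add`, `isStateFrame_of_hasSum`).

Testing the hypothesis on `u` against point masses gives `∑ β, ‖u β p‖ ^ 2 = 1` for each `p : P`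
(`hasSum_norm_sq_of_frame`). Hence on the deleted plank the `y β` contribute `1` exactly on
`P × ℕ∞`, and the `w n` contribute `1` exactly on `αP × ℕ`. These two sets cover the plank, so the
total pointwise sum is `1` or `2`.
-/

open ZeroAtInfty MeasureTheory OnePoint

/-- `K(P) = (αP × ℕ∞) \ {(∞_P, ∞)}`, where `αP` and `ℕ∞` are the one-point
compactifications of `P` and of `ℕ`, with the subspace topology. -/
abbrev deletedPlank (P : Type*) [TopologicalSpace P] : Type _ :=
  {q : OnePoint P × OnePoint ℕ // q ≠ (∞, ∞)}

/-- A family `(x j)` in `C₀(K, ℂ)` is a frame with bounds `0 < c₁ ≤ c₂` in the state sense. -/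
def IsStateFrame {K : Type*} [TopologicalSpace K] [MeasurableSpace K] {J : Type*}
    (x : J → C₀(K, ℂ)) (c₁ c₂ : ℝ) : Prop :=
  ∀ μ : Measure K, IsProbabilityMeasure μ → μ.Regular →
    ∀ v : C₀(K, ℂ),
      Summable (fun j : J => ∫ t, ‖v t * x j t‖ ^ 2 ∂μ) ∧
      c₁ * (∫ t, ‖v t‖ ^ 2 ∂μ) ≤ (∑' j : J, ∫ t, ‖v t * x j t‖ ^ 2 ∂μ) ∧
      (∑' j : J, ∫ t, ‖v t * x j t‖ ^ 2 ∂μ) ≤ c₂ * ∫ t, ‖v t‖ ^ 2 ∂μ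

/-- A point mass on a Hausdorff space is regular. -/
lemma regular_dirac {X : Type*} [TopologicalSpace X] [T2Space X] [MeasurableSpace X]
    [BorelSpace X] (p : X) : (Measure.dirac p).Regular where
  outerRegular := by
    intro A hA r hr
    by_cases hp : p ∈ A
    · refine ⟨Set.univ, Set.subset_univ _, isOpen_univ, ?_⟩
      simpa [Measure.dirac_apply' p hA, hp] using hr
    · refine ⟨{p}ᶜ, fun q hq hqp => hp (by rwa [← Set.mem_singleton_iff.1 hqp]),
        isOpen_compl_singleton, ?_⟩
      have h0 : (Measure.dirac p) A = 0 := by simp [Measure.dirac_apply' p hA, hp]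
      rw [h0] at hr
      simpa [Measure.dirac_apply] using hr
  innerRegular := by
    intro U hU r hr
    by_cases hp : p ∈ U
    · refine ⟨{p}, by simpa using hp, isCompact_singleton, ?_⟩
      simpa [Measure.dirac_apply, hp] using hr
    · simp [Measure.dirac_apply, hp] at hr

/-- Evaluating the frame identity at the point mass `δ_p` and at a Urysohn function equal to `1`
at `p` shows that `∑ β, ‖u β p‖ ^ 2 = 1`. -/
lemma hasSum_norm_sq_of_frame {P : Type*} [TopologicalSpace P] [LocallyCompactSpace P] [T2Space P]
    [MeasurableSpace P] [BorelSpace P] {B : Type*} (u : B → C₀(P, ℂ))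
    (hu : ∀ μ : Measure P, IsProbabilityMeasure μ → μ.Regular →
      ∀ x : C₀(P, ℂ),
        Summable (fun β : B => ∫ t, ‖x t * u β t‖ ^ 2 ∂μ) ∧
        (∑' β : B, ∫ t, ‖x t * u β t‖ ^ 2 ∂μ) = ∫ t, ‖x t‖ ^ 2 ∂μ)
    (p : P) : HasSum (fun β => ‖u β p‖ ^ 2) 1 := by
  obtain ⟨f, hf1, -, hfc, -⟩ := exists_continuous_one_zero_of_isCompact (isCompact_singleton (x := p))
    isClosed_empty (Set.disjoint_empty _)
  have hfp : f p = 1 := hf1 rfl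
  have hg : HasCompactSupport (fun t => ((f t : ℝ) : ℂ)) :=
    hfc.comp_left (g := fun r : ℝ => (r : ℂ)) Complex.ofReal_zero
  let x : C₀(P, ℂ) :=
    { toFun := fun t => ((f t : ℝ) : ℂ)
      continuous_toFun := by fun_prop
      zero_at_infty' := hg.is_zero_at_infty }
  have hx : x p = 1 := by
    change ((f p : ℝ) : ℂ) = 1
    rw [hfp]; simp
  obtain ⟨hs, ht⟩ := hu (Measure.dirac p) inferInstance (regular_dirac p) x
  simp only [integral_dirac, hx, one_mul, norm_one, one_pow] at hs ht
  exact ht ▸ hs.hasSum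

/-- Dini's theorem for regular measures: if a bounded continuous `a` is dominated pointwise by the
suprema of the finite partial sums of nonnegative continuous functions `g j`, then its integral is
at most that of some finite partial sum, up to an arbitrarily small error. -/
lemma exists_finset_le_integral_add {K : Type*} [TopologicalSpace K] [T2Space K]
    [MeasurableSpace K] [BorelSpace K] (μ : Measure K) [IsProbabilityMeasure μ] [μ.Regular]
    {J : Type*} (g : J → K → ℝ) (hgc : ∀ j, Continuous (g j)) (hg0 : ∀ j q, 0 ≤ g j q)
    (hgi : ∀ j, Integrable (g j) μ) (a : K → ℝ) (hac : Continuous a) (hai : Integrable a μ)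
    (M : ℝ) (hM : 0 ≤ M) (haM : ∀ q, a q ≤ M)
    (hsup : ∀ q, ∀ ε > 0, ∃ F : Finset J, a q - ε < ∑ j ∈ F, g j q) {δ : ℝ} (hδ : 0 < δ) :
    ∃ F : Finset J, ∫ q, a q ∂μ ≤ ∑ j ∈ F, ∫ q, g j q ∂μ + δ := by
  have hM1 : 0 < 1 + M := by positivity
  -- One `ε` is lost on the compact set, and `M * ε` off it.
  set ε : ℝ := δ / (1 + M) with hε
  have hε0 : 0 < ε := by positivity
  obtain ⟨C, -, hC, hCμ⟩ := (MeasurableSet.univ : MeasurableSet (Set.univ : Set K)).exists_isCompact_sdiff_lt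
    (μ := μ) (measure_ne_top _ _) (ENNReal.ofReal_pos.2 hε0).ne'
  have hCm : MeasurableSet C := hC.isClosed.measurableSet
  have hCr : μ.real Cᶜ ≤ ε := by
    rw [Set.compl_eq_univ_sdiff]
    exact ENNReal.toReal_le_of_le_ofReal hε0.le hCμ.le
  obtain ⟨F, hF⟩ := hC.elim_directed_cover (fun F : Finset J => {q | a q - ε < ∑ j ∈ F, g j q})
    (fun F => isOpen_lt (by fun_prop) (by fun_prop))
    (fun q _ => Set.mem_iUnion.2 (hsup q ε hε0))
    (Monotone.directed_le fun F G hFG q (hq : _ < _) =>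
      hq.trans_le (Finset.sum_le_sum_of_subset_of_nonneg hFG fun j _ _ => hg0 j q))
  refine ⟨F, ?_⟩
  have hSi : Integrable (fun q => ∑ j ∈ F, g j q) μ := integrable_finsetSum _ fun j _ => hgi j
  have hIi : Integrable (Cᶜ.indicator fun _ => M) μ := (integrable_const M).indicator hCm.compl
  have hbd : ∀ q, a q ≤ (∑ j ∈ F, g j q) + ε + Cᶜ.indicator (fun _ => M) q := by
    intro q
    by_cases hq : q ∈ C
    · have h1 : a q - ε < ∑ j ∈ F, g j q := hF hq
      simp only [Set.mem_compl_iff, hq, not_true_eq_false, not_false_eq_true,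
        Set.indicator_of_notMem]
      linarith
    · have h1 : 0 ≤ ∑ j ∈ F, g j q := Finset.sum_nonneg fun j _ => hg0 j q
      rw [Set.indicator_of_mem (by exact hq)]
      linarith [haM q]
  have hSεi : Integrable (fun q => (∑ j ∈ F, g j q) + ε) μ := hSi.add (integrable_const ε)
  calc ∫ q, a q ∂μ ≤ ∫ q, ((∑ j ∈ F, g j q) + ε + Cᶜ.indicator (fun _ => M) q) ∂μ :=
        integral_mono hai (hSεi.add hIi) hbd
    _ = ∑ j ∈ F, ∫ q, g j q ∂μ + ε + μ.real Cᶜ * M := by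
        rw [integral_add hSεi hIi,
          integral_add hSi (integrable_const ε), integral_finsetSum _ fun j _ => hgi j,
          integral_indicator_const _ hCm.compl]
        simp
    _ ≤ ∑ j ∈ F, ∫ q, g j q ∂μ + ε + ε * M := by gcongr
    _ = ∑ j ∈ F, ∫ q, g j q ∂μ + δ := by
        have : ε * (1 + M) = δ := div_mul_cancel₀ δ hM1.ne'
        linarith

/-- Pointwise bounds on `∑ j, ‖x j q‖ ^ 2` are frame bounds in the state sense, for index sets of
any cardinality. -/
lemma isStateFrame_of_hasSum {K : Type*} [TopologicalSpace K] [T2Space K]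
    [MeasurableSpace K] [BorelSpace K] {J : Type*} (x : J → C₀(K, ℂ))
    (h : ∀ q, ∃ S : ℝ, HasSum (fun j => ‖x j q‖ ^ 2) S ∧ 1 ≤ S ∧ S ≤ 2) :
    IsStateFrame x 1 2 := by
  intro μ _ _ v
  have hint : ∀ f : C₀(K, ℂ), Integrable (fun t => ‖f t‖ ^ 2) μ := fun f =>
    Integrable.of_bound (C := ‖f‖ ^ 2)
      (Continuous.aestronglyMeasurable (by fun_prop))
      (Filter.Eventually.of_forall fun t => by
        rw [Real.norm_of_nonneg (by positivity)]
        gcongr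
        exact f.toBCF.norm_coe_le_norm t)
  have hgi : ∀ j, Integrable (fun t => ‖v t * x j t‖ ^ 2) μ := fun j => hint (v * x j)
  have hsum : ∀ q, ∃ S : ℝ, HasSum (fun j => ‖v q * x j q‖ ^ 2) S ∧ ‖v q‖ ^ 2 ≤ S ∧
      S ≤ 2 * ‖v q‖ ^ 2 := by
    intro q
    obtain ⟨S, hS, h1, h2⟩ := h q
    refine ⟨‖v q‖ ^ 2 * S, ?_, ?_, ?_⟩
    · simpa only [norm_mul, mul_pow] using hS.mul_left (‖v q‖ ^ 2)
    · nlinarith [sq_nonneg ‖v q‖]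
    · nlinarith [sq_nonneg ‖v q‖]
  have hn : ∀ j, 0 ≤ ∫ t, ‖v t * x j t‖ ^ 2 ∂μ := fun j =>
    integral_nonneg fun t => by positivity
  have hub : ∀ F : Finset J, ∑ j ∈ F, ∫ t, ‖v t * x j t‖ ^ 2 ∂μ ≤ 2 * ∫ t, ‖v t‖ ^ 2 ∂μ := by
    intro F
    rw [← integral_finsetSum _ fun j _ => hgi j, ← integral_const_mul]
    refine integral_mono (integrable_finsetSum _ fun j _ => hgi j) ((hint v).const_mul 2) ?_
    intro q
    obtain ⟨S, hS, -, h2⟩ := hsum q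
    exact (sum_le_hasSum F (fun j _ => by positivity) hS).trans h2
  have hsm : Summable (fun j => ∫ t, ‖v t * x j t‖ ^ 2 ∂μ) := summable_of_sum_le hn hub
  refine ⟨hsm, ?_, hsm.tsum_le_of_sum_le hub⟩
  rw [one_mul]
  refine le_of_forall_pos_le_add fun δ hδ => ?_
  obtain ⟨F, hF⟩ := exists_finset_le_integral_add μ (fun j t => ‖v t * x j t‖ ^ 2)
    (fun j => by fun_prop) (fun j q => by positivity) hgi (fun t => ‖v t‖ ^ 2) (by fun_prop)
    (hint v) (‖v‖ ^ 2) (by positivity)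
    (fun q => by gcongr; exact v.toBCF.norm_coe_le_norm q)
    (fun q ε hε => by
      obtain ⟨S, hS, h1, -⟩ := hsum q
      exact (hS.eventually (lt_mem_nhds (show ‖v q‖ ^ 2 - ε < S by linarith))).exists) hδ
  exact hF.trans (by gcongr; exact hsm.sum_le_tsum F fun j _ => hn j)

/-- Let `(u β)` be a normalized frame in the state sense in `C₀(P)`: for every regular
Borel probability measure `μ` on `P` and every `x ∈ C₀(P)` the family `(∫ ‖x·u β‖² dμ)` is
summable with sum `∫ ‖x‖² dμ`. On `K = (αP × ℕ∞) \ {(∞_P, ∞)}` let `y β` copy `u β` on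
each row (vanishing on `{∞_P} × ℕ∞`) and let `w n` be the indicator of the clopen compact
set `αP × {n}`. Then the combined family `(y β) ∪ (w n)` is a frame in `C₀(K)` with bounds
`1` and `2` in the state sense. -/
theorem deletedPlank_frame
    (P : Type*) [TopologicalSpace P] [LocallyCompactSpace P] [T2Space P]
    [MeasurableSpace P] [BorelSpace P]
    [MeasurableSpace (deletedPlank P)] [BorelSpace (deletedPlank P)]
    {B : Type*} (u : B → C₀(P, ℂ))
    (hu : ∀ μ : Measure P, IsProbabilityMeasure μ → μ.Regular →
      ∀ x : C₀(P, ℂ),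
        Summable (fun β : B => ∫ t, ‖x t * u β t‖ ^ 2 ∂μ) ∧
        (∑' β : B, ∫ t, ‖x t * u β t‖ ^ 2 ∂μ) = ∫ t, ‖x t‖ ^ 2 ∂μ)
    (y : B → C₀(deletedPlank P, ℂ))
    (hy : ∀ (β : B) (p : P) (n : OnePoint ℕ)
      (h : ((p : OnePoint P), n) ≠ ((∞ : OnePoint P), (∞ : OnePoint ℕ))),
        y β ⟨((p : OnePoint P), n), h⟩ = u β p)
    (hyInf : ∀ (β : B) (n : OnePoint ℕ)
      (h : ((∞ : OnePoint P), n) ≠ ((∞ : OnePoint P), (∞ : OnePoint ℕ))),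
        y β ⟨((∞ : OnePoint P), n), h⟩ = 0)
    (w : ℕ → C₀(deletedPlank P, ℂ))
    (hw : ∀ (n : ℕ) (a : OnePoint P)
      (h : (a, ((n : ℕ) : OnePoint ℕ)) ≠ ((∞ : OnePoint P), (∞ : OnePoint ℕ))),
        w n ⟨(a, ((n : ℕ) : OnePoint ℕ)), h⟩ = 1)
    (hw0 : ∀ (n : ℕ) (a : OnePoint P) (m : OnePoint ℕ) (hm : m ≠ ((n : ℕ) : OnePoint ℕ))
      (h : (a, m) ≠ ((∞ : OnePoint P), (∞ : OnePoint ℕ))),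
        w n ⟨(a, m), h⟩ = 0) :
    IsStateFrame (Sum.elim y w) 1 2 := by
  refine isStateFrame_of_hasSum _ ?_
  -- At any point, at most one of the indicators `w n` is nonzero.
  have hwn : ∀ (a : OnePoint P) (n : ℕ) (h : (a, (n : OnePoint ℕ)) ≠ (∞, ∞)),
      HasSum (fun k => ‖w k ⟨(a, (n : OnePoint ℕ)), h⟩‖ ^ 2) (1 : ℝ) := by
    intro a n h
    convert hasSum_single n ?_ using 1
    · simp [hw n a h]
    · intro k hk
      have hne : (n : OnePoint ℕ) ≠ (k : OnePoint ℕ) := fun e => hk (OnePoint.coe_injective e).symm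
      simp [hw0 k a _ hne h]
  rintro ⟨⟨a, m⟩, h⟩
  induction a using OnePoint.rec with
  | infty =>
    induction m using OnePoint.rec with
    | infty => exact absurd rfl h
    | coe n =>
      refine ⟨0 + 1, HasSum.sum ?_ (hwn _ n h), by norm_num, by norm_num⟩
      simp [Function.comp_def, hyInf _ _ h, hasSum_zero]
  | coe p =>
    have hyp : HasSum (fun β => ‖y β ⟨((p : OnePoint P), m), h⟩‖ ^ 2) 1 := by
      simpa only [hy _ p m h] using hasSum_norm_sq_of_frame u hu p
    induction m using OnePoint.rec with
    | infty =>
      refine ⟨1 + 0, HasSum.sum hyp ?_, by norm_num, by norm_num⟩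
      have h0 : ∀ k, w k ⟨((p : OnePoint P), ∞), h⟩ = 0 := fun k =>
        hw0 k _ _ (OnePoint.infty_ne_coe k) h
      simp [Function.comp_def, h0, hasSum_zero]
    | coe n => exact ⟨1 + 1, HasSum.sum hyp (hwn _ n h), by norm_num, by norm_num⟩
end

section
/- Let P be a noncompact locally compact Hausdorff space in which every σ-compact subset has compact closure, and let K = K(P) = (αP × ℕ∞) \ {(∞_P, ∞)}. Then the closed unit ball B of C₀(K) is totally bounded with respect to every pseudometric d_{X,Φ}: for every (C_b(K), C₀(K))-admissible sequence X = (x_i)_{i∈ℕ} in C_b(K), every sequence Φ = (μ_k)_{k∈ℕ} of regular Borel probability measures on K, and every ε > 0, there exist finitely many elements y_1, …, y_m of B such that for every y ∈ B there is some l with d_{X,Φ}(y, y_l) < ε. -/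
/-!
The point is that the series `∑ |X i|²` converges uniformly on all of `K(P)`, not only on
compact sets (`exists_uniform_tail`). If it did not, there would be `δ > 0` and points `t N`
at which some finite piece of the series beyond index `N` exceeds `δ`. Such a piece is a
continuous function and `P × ℕ∞` is dense in `K(P)`, so the `t N` can be taken in `P × ℕ∞`.
Their first coordinates form a countable subset of `P`, whose closure `C` is compact by
hypothesis, so that all `t N` lie in the compact set `C × ℕ∞`. This contradicts the uniform
convergence on compact sets, which is what admissibility gives.

With uniform tails, Jensen's inequality bounds the part of `d_{X,Φ}` coming from indices
`i ≥ N`, uniformly in `k` and over the unit ball (`sum_sq_integral_le`). Only the finitely many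
functionals `y ↦ ∫ conj y · X i dΦ k` with `k, i < N` remain; together they send the unit ball to
a bounded, hence totally bounded, subset of a finite-dimensional space.
-/

open ZeroAtInfty OnePoint BoundedContinuousFunction MeasureTheory

/-- A sequence `(X i)` in `C_b(K)` is `(C_b(K), C₀(K))`-admissible: `‖X i‖ ≤ 1` for all `i`
and for every `v ∈ C₀(K)` the family of functions `(|X i|² · |v|²)` is summable in the norm
of `C₀(K)` with `∑' i, ‖X i t‖² · ‖v t‖² ≤ ‖v t‖²` for all `t ∈ K`. -/
def IsAdmissible {K : Type*} [TopologicalSpace K] (X : ℕ → (K →ᵇ ℂ)) : Prop :=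
  (∀ i : ℕ, ‖X i‖ ≤ 1) ∧
  ∀ v : C₀(K, ℂ),
    Summable (fun i : ℕ => star (X i) * X i * (star v.toBCF * v.toBCF)) ∧
    ∀ t : K, (∑' i : ℕ, ‖X i t‖ ^ 2 * ‖v t‖ ^ 2) ≤ ‖v t‖ ^ 2

/-- The pseudometric `d_{X,Φ}` on `C₀(K)`:
`d_{X,Φ}(y,z)² = sup_k ∑_{i=k}^∞ |∫ conj (y − z) · X i dμ_k|²`. -/
noncomputable def dXPhi {K : Type*} [TopologicalSpace K] [MeasurableSpace K]
    (X : ℕ → (K →ᵇ ℂ)) (Φ : ℕ → Measure K) (y z : C₀(K, ℂ)) : ℝ :=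
  Real.sqrt (⨆ k : ℕ, ∑' i : ℕ,
    ‖∫ t, (starRingEnd ℂ) (y t - z t) * X (i + k) t ∂(Φ k)‖ ^ 2)

/-- Uniform convergence of `∑ |X i|²` on a compact subset of a locally compact space. -/
lemma IsAdmissible.exists_tail_on_compact {K : Type*} [TopologicalSpace K] [T2Space K]
    [LocallyCompactSpace K] {X : ℕ → (K →ᵇ ℂ)} (hX : IsAdmissible X) {L : Set K}
    (hL : IsCompact L) {δ : ℝ} (hδ : 0 < δ) :
    ∃ N : ℕ, ∀ t ∈ L, ∀ F : Finset ℕ, (∀ i ∈ F, N ≤ i) → ∑ i ∈ F, ‖X i t‖ ^ 2 < δ := by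
  obtain ⟨f, hf1, -, hfc, -⟩ := exists_continuous_one_zero_of_isCompact hL isClosed_empty
    (Set.disjoint_empty L)
  -- a Urysohn function `v ∈ C₀(K)` with `v = 1` on `L`
  let v : C₀(K, ℂ) :=
    { toFun := fun t => (f t : ℂ)
      continuous_toFun := by fun_prop
      zero_at_infty' := by
        have h := hfc.is_zero_at_infty
        have h2 := (Complex.continuous_ofReal.tendsto 0).comp h
        simpa [Function.comp_def] using h2 }
  obtain ⟨s, hs⟩ := summable_iff_vanishing_norm.1 (hX.2 v).1 δ hδ
  refine ⟨s.sup id + 1, fun t ht F hF => ?_⟩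
  have hdisj : Disjoint F s := by
    rw [Finset.disjoint_left]
    intro i hi his
    have h1 := hF i hi
    have h2 : i ≤ s.sup id := Finset.le_sup (f := id) his
    omega
  have h3 := (BoundedContinuousFunction.norm_coe_le_norm _ t).trans_lt (hs F hdisj)
  have hv : v t = 1 := by
    change ((f t : ℝ) : ℂ) = 1
    rw [hf1 ht]; simp
  have h4 : (∑ i ∈ F, star (X i) * X i * (star v.toBCF * v.toBCF)) t
      = ((∑ i ∈ F, ‖X i t‖ ^ 2 : ℝ) : ℂ) := by
    rw [BoundedContinuousFunction.coe_sum, Finset.sum_apply]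
    push_cast
    refine Finset.sum_congr rfl fun i _ => ?_
    change star (X i t) * X i t * (star (v t) * v t) = _
    rw [hv]
    simpa using Complex.conj_mul' (X i t)
  rw [h4, Complex.norm_real, Real.norm_of_nonneg (by positivity)] at h3
  exact h3

instance deletedPlank.instLocallyCompactSpace (P : Type*) [TopologicalSpace P]
    [LocallyCompactSpace P] [T2Space P] : LocallyCompactSpace (deletedPlank P) :=
  (isOpen_ne (x := ((∞, ∞) : OnePoint P × OnePoint ℕ)))
    |>.isOpenEmbedding_subtypeVal.locallyCompactSpace

/-- `P × ℕ∞` is dense in `K(P)` when `P` is not compact. -/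
lemma deletedPlank.exists_mem_of_isOpen {P : Type*} [TopologicalSpace P] [NoncompactSpace P]
    {U : Set (deletedPlank P)} (hU : IsOpen U) (hne : U.Nonempty) :
    ∃ t ∈ U, ∃ p : P, t.1.1 = (p : OnePoint P) := by
  obtain ⟨⟨⟨a, n⟩, hq⟩, htU⟩ := hne
  induction a using OnePoint.rec with
  | coe p => exact ⟨_, htU, p, rfl⟩
  | infty =>
    have hn : n ≠ ∞ := fun h => hq (by rw [h])
    let g : OnePoint P → deletedPlank P := fun q => ⟨(q, n), fun h => hn (Prod.ext_iff.1 h).2⟩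
    have hg : Continuous g := by fun_prop
    obtain ⟨p, hp⟩ := (denseRange_coe (X := P)).exists_mem_open (hU.preimage hg) ⟨∞, htU⟩
    exact ⟨_, hp, p, rfl⟩

/-- On `K(P)` the series `∑ |X i|²` converges uniformly. -/
lemma IsAdmissible.exists_uniform_tail {P : Type*} [TopologicalSpace P] [LocallyCompactSpace P]
    [T2Space P] [NoncompactSpace P]
    (hIV : ∀ s : Set P, IsSigmaCompact s → IsCompact (closure s))
    {X : ℕ → (deletedPlank P →ᵇ ℂ)} (hX : IsAdmissible X) {δ : ℝ} (hδ : 0 < δ) :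
    ∃ N : ℕ, ∀ t, ∀ F : Finset ℕ, (∀ i ∈ F, N ≤ i) → ∑ i ∈ F, ‖X i t‖ ^ 2 ≤ δ := by
  by_contra! hcon
  have key : ∀ N : ℕ, ∃ t : deletedPlank P, ∃ p : P, t.1.1 = (p : OnePoint P) ∧
      ∃ F : Finset ℕ, (∀ i ∈ F, N ≤ i) ∧ δ < ∑ i ∈ F, ‖X i t‖ ^ 2 := by
    intro N
    obtain ⟨t, F, hF, ht⟩ := hcon N
    have hopen : IsOpen {t | δ < ∑ i ∈ F, ‖X i t‖ ^ 2} :=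
      isOpen_lt continuous_const
        (continuous_finsetSum _ fun i _ => ((X i).continuous.norm.pow 2))
    obtain ⟨t', ht', p, hp⟩ := deletedPlank.exists_mem_of_isOpen hopen ⟨t, ht⟩
    exact ⟨t', p, hp, F, hF, ht'⟩
  choose t p htp F hF hlt using key
  have hC : IsCompact (closure (Set.range p)) := by
    refine hIV _ ?_
    rw [← Set.iUnion_singleton_eq_range]
    exact isSigmaCompact_iUnion_of_isCompact _ fun _ => isCompact_singleton
  let g : P × OnePoint ℕ → deletedPlank P :=
    fun q => ⟨((q.1 : OnePoint P), q.2), fun h => coe_ne_infty _ (Prod.ext_iff.1 h).1⟩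
  have hg : Continuous g :=
    ((OnePoint.continuous_coe.comp continuous_fst).prodMk continuous_snd).subtype_mk _
  obtain ⟨N, hN⟩ := hX.exists_tail_on_compact ((hC.prod isCompact_univ).image hg) hδ
  refine lt_asymm (hlt N) (hN (t N) ⟨(p N, (t N).1.2), ?_, ?_⟩ (F N) (hF N))
  · exact ⟨subset_closure ⟨N, rfl⟩, trivial⟩
  · exact Subtype.ext (Prod.ext (htp N).symm rfl)

lemma integrable_conj_mul {K : Type*} [TopologicalSpace K] [MeasurableSpace K] [BorelSpace K]
    (μ : Measure K) [IsProbabilityMeasure μ] (f g : K →ᵇ ℂ) :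
    Integrable (fun t => (starRingEnd ℂ) (f t) * g t) μ :=
  (star f * g).integrable μ

/-- Jensen's inequality for the squared modulus of an integral. -/
lemma sq_norm_integral_le {K : Type*} [TopologicalSpace K] [MeasurableSpace K] [BorelSpace K]
    (μ : Measure K) [IsProbabilityMeasure μ] (f : K →ᵇ ℂ) :
    ‖∫ t, f t ∂μ‖ ^ 2 ≤ ∫ t, ‖f t‖ ^ 2 ∂μ := by
  have h2 : Integrable (fun t => ‖f t‖ ^ 2) μ := by
    have := (f.normComp * f.normComp).integrable μ
    refine this.congr (Filter.Eventually.of_forall fun t => ?_)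
    simp [pow_two]
  have h := (even_two.convexOn_pow (𝕜 := ℝ)).map_integral_le (μ := μ) (f := fun t => ‖f t‖)
    (continuous_pow 2).continuousOn isClosed_univ (by simp) (f.integrable μ).norm h2
  exact (pow_le_pow_left₀ (norm_nonneg _) (norm_integral_le_integral_norm _) 2).trans h

/-- A pointwise bound on a finite part of `∑ |X i|²` bounds the corresponding part of
`∑ |∫ conj f · X i dμ|²`, for `‖f‖ ≤ 2` (as for a difference of two points of the unit ball). -/
lemma sum_sq_integral_le {K : Type*} [TopologicalSpace K] [MeasurableSpace K] [BorelSpace K]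
    (μ : Measure K) [IsProbabilityMeasure μ] (f : K →ᵇ ℂ) (hf : ∀ t, ‖f t‖ ≤ 2)
    (X : ℕ → (K →ᵇ ℂ)) (F : Finset ℕ) {δ : ℝ} (h : ∀ t, ∑ i ∈ F, ‖X i t‖ ^ 2 ≤ δ) :
    ∑ i ∈ F, ‖∫ t, (starRingEnd ℂ) (f t) * X i t ∂μ‖ ^ 2 ≤ 4 * δ := by
  have hint : ∀ i ∈ F, Integrable (fun t => ‖(star f * X i) t‖ ^ 2) μ := fun i _ => by
    have := ((star f * X i).normComp * (star f * X i).normComp).integrable μ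
    refine this.congr (Filter.Eventually.of_forall fun t => ?_)
    simp [pow_two]
  calc ∑ i ∈ F, ‖∫ t, (starRingEnd ℂ) (f t) * X i t ∂μ‖ ^ 2
      ≤ ∑ i ∈ F, ∫ t, ‖(star f * X i) t‖ ^ 2 ∂μ :=
        Finset.sum_le_sum fun i _ => sq_norm_integral_le μ (star f * X i)
    _ = ∫ t, ∑ i ∈ F, ‖(star f * X i) t‖ ^ 2 ∂μ := (integral_finsetSum F hint).symm
    _ ≤ ∫ _, 4 * δ ∂μ := by
        refine integral_mono (integrable_finsetSum F hint) (integrable_const _) fun t => ?_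
        have h1 : ∀ i, ‖(star f * X i) t‖ ^ 2 = ‖f t‖ ^ 2 * ‖X i t‖ ^ 2 := fun i => by
          simp [mul_pow]
        simp only [h1, ← Finset.mul_sum]
        have h4 : ‖f t‖ ^ 2 ≤ 4 := by nlinarith [hf t, norm_nonneg (f t)]
        exact mul_le_mul h4 (h t) (by positivity) (by norm_num)
    _ = 4 * δ := by simp

/-- Let `P` be a noncompact locally compact Hausdorff space in which every `σ`-compact
subset has compact closure, and `K = (αP × ℕ∞) \ {(∞_P, ∞)}`. Then the closed unit ball of
`C₀(K)` is totally bounded with respect to every pseudometric `d_{X,Φ}` with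
`(C_b(K), C₀(K))`-admissible `X` and `Φ` a sequence of regular Borel probability measures:
for every `ε > 0` there is a finite `ε`-net in the ball for `d_{X,Φ}`. -/
theorem unitBall_totallyBounded_deletedPlank
    (P : Type*) [TopologicalSpace P] [LocallyCompactSpace P] [T2Space P]
    [MeasurableSpace (deletedPlank P)] [BorelSpace (deletedPlank P)]
    (hnc : ¬ CompactSpace P)
    (hIV : ∀ s : Set P, IsSigmaCompact s → IsCompact (closure s))
    (X : ℕ → (deletedPlank P →ᵇ ℂ)) (hX : IsAdmissible X)
    (Φ : ℕ → Measure (deletedPlank P))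
    (hΦp : ∀ k, IsProbabilityMeasure (Φ k)) (hΦr : ∀ k, (Φ k).Regular)
    (ε : ℝ) (hε : 0 < ε) :
    ∃ (m : ℕ) (ys : Fin m → C₀(deletedPlank P, ℂ)),
      (∀ l : Fin m, ‖ys l‖ ≤ 1) ∧
      ∀ y : C₀(deletedPlank P, ℂ), ‖y‖ ≤ 1 →
        ∃ l : Fin m, dXPhi X Φ y (ys l) < ε := by
  have : NoncompactSpace P := not_compactSpace_iff.1 hnc
  -- the tail contributes `4 * δ` and the finite part `δ` to `d²`, and `5 * δ < ε ^ 2`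
  obtain ⟨δ, hδ, hδε⟩ : ∃ δ : ℝ, 0 < δ ∧ δ + 4 * δ < ε ^ 2 :=
    ⟨ε ^ 2 / 8, by positivity, by nlinarith [pow_pos hε 2]⟩
  obtain ⟨N, hN⟩ := hX.exists_uniform_tail hIV hδ
  obtain ⟨η, hη, hηN⟩ : ∃ η : ℝ, 0 < η ∧ N * η ^ 2 ≤ δ := by
    refine ⟨Real.sqrt (δ / (N + 1)), Real.sqrt_pos.2 (by positivity), ?_⟩
    rw [Real.sq_sqrt (by positivity), mul_div_assoc', div_le_iff₀ (by positivity)]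
    nlinarith
  let T : C₀(deletedPlank P, ℂ) → (Fin N × Fin N → ℂ) :=
    fun y q => ∫ t, (starRingEnd ℂ) (y t) * X q.2 t ∂(Φ q.1)
  have hpt : ∀ y : C₀(deletedPlank P, ℂ), ‖y‖ ≤ 1 → ∀ t, ‖y t‖ ≤ 1 := fun y hy t =>
    (y.toBCF.norm_coe_le_norm t).trans hy
  have hTB : TotallyBounded (T '' {y | ‖y‖ ≤ 1}) := by
    refine (isCompact_closedBall (0 : Fin N × Fin N → ℂ) 1).totallyBounded.subset ?_
    rintro _ ⟨y, hy, rfl⟩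
    rw [mem_closedBall_zero_iff, pi_norm_le_iff_of_nonneg zero_le_one]
    intro q
    have := norm_integral_le_of_norm_le_const (μ := Φ q.1) (C := 1)
      (f := fun t => (starRingEnd ℂ) (y t) * X q.2 t) (Filter.Eventually.of_forall fun t => by
        rw [norm_mul, RCLike.norm_conj]
        exact mul_le_one₀ (hpt y hy t) (norm_nonneg _)
          (((X q.2).norm_coe_le_norm t).trans (hX.1 _)))
    simpa using this
  obtain ⟨S, hSsub, hSfin, hScov⟩ := Metric.finite_approx_of_totallyBounded hTB η hη
  have hS : ∀ s ∈ S, ∃ y : C₀(deletedPlank P, ℂ), ‖y‖ ≤ 1 ∧ T y = s := fun s hs => hSsub hs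
  choose! w hw1 hwT using hS
  refine ⟨hSfin.toFinset.card, fun l => w (hSfin.toFinset.equivFin.symm l), fun l => ?_,
    fun y hy => ?_⟩
  · exact hw1 _ (hSfin.mem_toFinset.1 (hSfin.toFinset.equivFin.symm l).2)
  obtain ⟨s, hs, hys⟩ := Set.mem_iUnion₂.1 (hScov ⟨y, hy, rfl⟩)
  refine ⟨hSfin.toFinset.equivFin ⟨s, hSfin.mem_toFinset.2 hs⟩, ?_⟩
  simp only [Equiv.symm_apply_apply]
  set z := w s with hz
  have hz1 : ‖z‖ ≤ 1 := hw1 s hs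
  rw [← hwT s hs, Metric.mem_ball, dist_eq_norm, pi_norm_lt_iff hη] at hys
  -- `a k i` is the term of index `i` in the `k`-th sum defining `d²`
  let a : ℕ → ℕ → ℝ := fun k i => ‖∫ t, (starRingEnd ℂ) (y t - z t) * X i t ∂(Φ k)‖ ^ 2
  have ha : ∀ k < N, ∀ i < N, a k i ≤ η ^ 2 := by
    intro k hk i hi
    have h := hys (⟨k, hk⟩, ⟨i, hi⟩)
    have heq : (T y - T z) (⟨k, hk⟩, ⟨i, hi⟩)
        = ∫ t, (starRingEnd ℂ) (y t - z t) * X i t ∂(Φ k) := by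
      simp only [Pi.sub_apply, T]
      refine (integral_sub (integrable_conj_mul (Φ k) y.toBCF (X i))
        (integrable_conj_mul (Φ k) z.toBCF (X i))).symm.trans ?_
      simp only [map_sub, sub_mul]
      rfl
    rw [heq] at h
    exact pow_le_pow_left₀ (norm_nonneg _) h.le 2
  have hfin : ∀ k (F : Finset ℕ), (∀ i ∈ F, k ≤ i) → ∑ i ∈ F, a k i ≤ δ + 4 * δ := by
    intro k F hF
    rw [← Finset.sum_filter_add_sum_filter_not F (· < N)]
    refine add_le_add ?_ ?_
    · have h1 : ∀ i ∈ F.filter (· < N), a k i ≤ η ^ 2 := fun i hi => by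
        rw [Finset.mem_filter] at hi
        exact ha k ((hF i hi.1).trans_lt hi.2) i hi.2
      have hcard : (F.filter (· < N)).card ≤ N := by
        have : F.filter (· < N) ⊆ Finset.range N := fun i hi =>
          Finset.mem_range.2 (Finset.mem_filter.1 hi).2
        simpa using Finset.card_le_card this
      have h2 := Finset.sum_le_card_nsmul _ _ _ h1
      rw [nsmul_eq_mul] at h2
      exact h2.trans ((mul_le_mul_of_nonneg_right (by exact_mod_cast hcard)
        (sq_nonneg η)).trans hηN)
    · refine sum_sq_integral_le (Φ k) (y.toBCF - z.toBCF) (fun t => ?_) X _ fun t =>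
        hN t _ fun i hi => not_lt.1 (Finset.mem_filter.1 hi).2
      have := norm_sub_le (y t) (z t)
      have h1 := hpt y hy t
      have h2 := hpt z hz1 t
      change ‖y t - z t‖ ≤ 2
      linarith
  have hsup : (⨆ k : ℕ, ∑' i : ℕ, a k (i + k)) ≤ δ + 4 * δ := by
    refine ciSup_le fun k => Real.tsum_le_of_sum_range_le (fun i => sq_nonneg _) fun n => ?_
    have := hfin k ((Finset.range n).map (addRightEmbedding k)) (by simp)
    simpa using this
  exact (Real.sqrt_lt' hε).2 (hsup.trans_lt hδε)
end
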